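/- Welfare of the restricted-best-response fixed point: let ε ∈ [0,1], let x* be an optimal pure profile that is a disjoint union of jolly stars, let D* be the set of agents voting themselves in x*, and for j ∈ D* let L_j be the agents delegating to j in x*. Let x be any mixed profile such that for every i ∈ D*, x_{ii} ≥ ε, and for every j ∉ D*, u_j(x_j, x_{−j}) ≥ u_j(x̂_j, x_{−j}) for all x̂_j with Σ_k x̂_{jk} = 1. Then SW(x) ≥ ε · OPT. -/

import Mathlib

/-!
The bound holds agent by agent, and against an arbitrary pure profile `s`. If `i` votes herself
in `s`, then under `x` she is her own guru with probability at least `ε`. If her guru in `s` is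
some other agent `k`, she can deviate to delegating directly to `k`, and then gets `k` as her guru
whenever `k` votes; this has probability at least `ε`, because the strategy of `k` is unaffected
by the deviation. As the deviation does not pay, `i` already has `ε` times her utility in `s`.
-/

open Finset

/-- The guru of agent `i` under pure profile `s` (where `s i = some j` means `i`
delegates to `j`, with `s i = some i` meaning `i` votes herself, and `s i = none`
meaning `i` abstains): follow delegation arcs for `n` steps; the endpoint is the
guru provided it votes itself. -/
def guru {n : ℕ} (s : Fin n → Option (Fin n)) (i : Fin n) : Option (Fin n) :=
  ((fun o => Option.bind o s)^[n] (some i)).bind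
    (fun j => if s j = some j then some j else none)

/-- Utility of agent `i` in the pure profile `s`: `u i (g i)` if the guru exists, else `0`. -/
def pureUtil {n : ℕ} (u : Fin n → Fin n → ℝ) (s : Fin n → Option (Fin n)) (i : Fin n) : ℝ :=
  (guru s i).elim 0 (u i)

/-- A mixed strategy for a single agent: nonnegative, total probability at most one
(the residual probability is abstention). -/
def IsStrat {n : ℕ} (y : Fin n → ℝ) : Prop := (∀ j, 0 ≤ y j) ∧ (∑ j, y j) ≤ 1

/-- A mixed strategy profile. -/
def IsMixed {n : ℕ} (x : Fin n → Fin n → ℝ) : Prop := ∀ i, IsStrat (x i)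

/-- Probability that the independent randomization `x` produces the pure profile `s`. -/
def prob {n : ℕ} (x : Fin n → Fin n → ℝ) (s : Fin n → Option (Fin n)) : ℝ :=
  ∏ i, (s i).elim (1 - ∑ j, x i j) (x i)

/-- Expected utility of agent `i` under the mixed profile `x`. -/
def util {n : ℕ} (u x : Fin n → Fin n → ℝ) (i : Fin n) : ℝ :=
  ∑ s : Fin n → Option (Fin n), prob x s * pureUtil u s i

/-- Expected social welfare of the mixed profile `x`. -/
def SW {n : ℕ} (u x : Fin n → Fin n → ℝ) : ℝ := ∑ i, util u x i

/-- The set of social-welfare values achievable by mixed profiles; `OPT` is its greatest element. -/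
def SWvals {n : ℕ} (u : Fin n → Fin n → ℝ) : Set ℝ :=
  {w | ∃ x, IsMixed x ∧ w = SW u x}

/-- `x` is an `ε`-Nash equilibrium. -/
def EpsNash {n : ℕ} (u : Fin n → Fin n → ℝ) (ε : ℝ) (x : Fin n → Fin n → ℝ) : Prop :=
  ∀ i y, IsStrat y → util u x i ≥ (1 - ε) * util u (Function.update x i y) i

/-- `x` is an (exact, mixed) Nash equilibrium. -/
def NashEq {n : ℕ} (u x : Fin n → Fin n → ℝ) : Prop :=
  ∀ i y, IsStrat y → util u x i ≥ util u (Function.update x i y) i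

theorem sum_prod_filter_apply_eq {ι R : Type*} {κ : ι → Type*} [Fintype ι] [DecidableEq ι]
    [∀ j, Fintype (κ j)] [∀ j, DecidableEq (κ j)] [CommSemiring R] (w : ∀ j, κ j → R) {i : ι}
    (a : κ i) (hw : ∀ j ≠ i, ∑ b, w j b = 1) :
    ∑ s : ∀ j, κ j with s i = a, ∏ j, w j (s j) = w i a := by
  rw [← Fintype.piFinset_univ,
    ← Fintype.piFinset_update_singleton_eq_filter_piFinset_eq (fun _ : ι => univ) i
      (mem_univ a), ← prod_univ_sum,
    Fintype.prod_eq_single i fun j hj => by rw [Function.update_of_ne hj, hw j hj],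
    Function.update_self, sum_singleton]

section Guru

variable {n : ℕ} {s : Fin n → Option (Fin n)} {i k : Fin n}

theorem guru_eq_some_of_delegates_to_voter (hi : s i = some k) (hk : s k = some k) :
    guru s i = some k := by
  obtain ⟨m, rfl⟩ : ∃ m, n = m + 1 := Nat.exists_eq_add_one.mpr i.pos
  have hfix : (fun o => Option.bind o s)^[m] (some k) = some k := Function.iterate_fixed hk m
  simp only [guru, Function.iterate_succ_apply, Option.bind_some, hi, hfix, hk, if_true]

theorem votes_self_of_guru_eq_some (h : guru s i = some k) : s k = some k := by
  obtain ⟨j, -, hj⟩ := Option.bind_eq_some_iff.mp h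
  obtain ⟨hvote, hjk⟩ := Option.ite_none_right_eq_some.mp hj
  rwa [Option.some_inj.mp hjk] at hvote

theorem pureUtil_of_guru_eq_some (u : Fin n → Fin n → ℝ) (h : guru s i = some k) :
    pureUtil u s i = u i k := by
  rw [pureUtil, h, Option.elim_some]

theorem pureUtil_of_guru_eq_none (u : Fin n → Fin n → ℝ) (h : guru s i = none) :
    pureUtil u s i = 0 := by
  rw [pureUtil, h, Option.elim_none]

theorem pureUtil_nonneg {u : Fin n → Fin n → ℝ} (hu : ∀ j, 0 ≤ u i j) : 0 ≤ pureUtil u s i := by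
  cases h : guru s i with
  | none => rw [pureUtil_of_guru_eq_none u h]
  | some k => exact (hu k).trans_eq (pureUtil_of_guru_eq_some u h).symm

end Guru

section Strategy

variable {n : ℕ}

/-- The distribution over an agent's choices given by the mixed strategy `y`: `some j` has
probability `y j`, and `none` (abstention) the remaining probability. It turns `prob x` into a
product measure. -/
def choiceProb (y : Fin n → ℝ) (o : Option (Fin n)) : ℝ := o.elim (1 - ∑ j, y j) y

theorem sum_choiceProb (y : Fin n → ℝ) : ∑ o, choiceProb y o = 1 := by
  simp [choiceProb, Fintype.sum_option]

theorem choiceProb_nonneg {y : Fin n → ℝ} (hy : IsStrat y) (o : Option (Fin n)) :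
    0 ≤ choiceProb y o := by
  cases o with
  | none => exact sub_nonneg.mpr hy.2
  | some j => exact hy.1 j

theorem isStrat_single (k : Fin n) : IsStrat (Pi.single k 1) :=
  ⟨(Pi.single_nonneg (α := fun _ => ℝ)).mpr zero_le_one, (Fintype.sum_pi_single' k 1).le⟩

theorem eq_some_of_choiceProb_single_ne_zero {k : Fin n} {o : Option (Fin n)}
    (h : choiceProb (Pi.single k 1) o ≠ 0) : o = some k := by
  cases o with
  | none => simp [choiceProb] at h
  | some j => exact congrArg some (by simpa [choiceProb, Pi.single_apply] using h)

end Strategy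

section Profile

variable {n : ℕ} {u x : Fin n → Fin n → ℝ} {i k : Fin n}

theorem isMixed_update {y : Fin n → ℝ} (hx : IsMixed x) (hy : IsStrat y) :
    IsMixed (Function.update x i y) :=
  (Function.forall_update_iff x fun _ => IsStrat).mpr ⟨hy, fun j _ => hx j⟩

theorem prob_eq_prod_choiceProb (x : Fin n → Fin n → ℝ) (s : Fin n → Option (Fin n)) :
    prob x s = ∏ i, choiceProb (x i) (s i) :=
  rfl

theorem prob_nonneg (hx : IsMixed x) (s : Fin n → Option (Fin n)) : 0 ≤ prob x s := by
  rw [prob_eq_prod_choiceProb]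
  exact prod_nonneg fun i _ => choiceProb_nonneg (hx i) (s i)

theorem sum_prob_filter_apply_eq (x : Fin n → Fin n → ℝ) (i : Fin n) (o : Option (Fin n)) :
    ∑ s with s i = o, prob x s = choiceProb (x i) o := by
  simp only [prob_eq_prod_choiceProb]
  exact sum_prod_filter_apply_eq (fun j => choiceProb (x j)) o fun j _ => sum_choiceProb (x j)

theorem util_nonneg (hu : ∀ j, 0 ≤ u i j) (hx : IsMixed x) : 0 ≤ util u x i :=
  sum_nonneg fun s _ => mul_nonneg (prob_nonneg hx s) (pureUtil_nonneg hu)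

theorem mul_le_util_of_delegates_to_voter (hu : ∀ j, 0 ≤ u i j) (hx : IsMixed x)
    (h : ∀ s, prob x s ≠ 0 → s k = some k → s i = some k) :
    x k k * u i k ≤ util u x i :=
  calc x k k * u i k = ∑ s with s k = some k, prob x s * u i k := by
        rw [← sum_mul, sum_prob_filter_apply_eq, choiceProb, Option.elim_some]
    _ = ∑ s with s k = some k, prob x s * pureUtil u s i := by
        refine sum_congr rfl fun s hs => ?_
        have hk : s k = some k := (mem_filter_univ s).mp hs
        by_cases hp : prob x s = 0
        · rw [hp, zero_mul, zero_mul]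
        · rw [pureUtil_of_guru_eq_some u (guru_eq_some_of_delegates_to_voter (h s hp hk) hk)]
    _ ≤ util u x i :=
        sum_le_univ_sum_of_nonneg fun s =>
          mul_nonneg (prob_nonneg hx s) (pureUtil_nonneg hu)

theorem mul_le_util_update_single (hu : ∀ j, 0 ≤ u i j) (hx : IsMixed x) (hki : k ≠ i) :
    x k k * u i k ≤ util u (Function.update x i (Pi.single k 1)) i := by
  have hdelegates : ∀ s, prob (Function.update x i (Pi.single k 1)) s ≠ 0 → s i = some k := by
    intro s hs
    rw [prob_eq_prod_choiceProb, prod_ne_zero_iff] at hs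
    have hi := hs i (mem_univ i)
    rw [Function.update_self] at hi
    exact eq_some_of_choiceProb_single_ne_zero hi
  have hle := mul_le_util_of_delegates_to_voter (k := k) hu (isMixed_update hx (isStrat_single k))
    fun s hs _ => hdelegates s hs
  rwa [Function.update_of_ne hki] at hle

theorem mul_pureUtil_le_util {ε : ℝ} {s : Fin n → Option (Fin n)} (hu : ∀ j, 0 ≤ u i j)
    (hx : IsMixed x) (hvote : ∀ k, s k = some k → ε ≤ x k k)
    (hdev : s i ≠ some i → ∀ k, util u (Function.update x i (Pi.single k 1)) i ≤ util u x i) :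
    ε * pureUtil u s i ≤ util u x i := by
  cases hg : guru s i with
  | none => simpa only [pureUtil_of_guru_eq_none u hg, mul_zero] using util_nonneg hu hx
  | some k =>
    have hk : s k = some k := votes_self_of_guru_eq_some hg
    rw [pureUtil_of_guru_eq_some u hg]
    refine (mul_le_mul_of_nonneg_right (hvote k hk) (hu k)).trans ?_
    by_cases hki : k = i
    · subst hki
      exact mul_le_util_of_delegates_to_voter hu hx fun _ _ h => h
    · have hi : s i ≠ some i := fun hi =>
        hki (Option.some_inj.mp (hg.symm.trans (guru_eq_some_of_delegates_to_voter hi hi)))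
      exact (mul_le_util_update_single hu hx hki).trans (hdev hi k)

end Profile

theorem stmt8_general {n : ℕ} {ε : ℝ} {u x : Fin n → Fin n → ℝ} (hu : ∀ i j, 0 ≤ u i j)
    (s : Fin n → Option (Fin n)) (hx : IsMixed x) (hvote : ∀ i, s i = some i → ε ≤ x i i)
    (hdev : ∀ i, s i ≠ some i →
      ∀ k, util u (Function.update x i (Pi.single k 1)) i ≤ util u x i) :
    ε * ∑ i, pureUtil u s i ≤ SW u x := by
  rw [mul_sum]
  exact sum_le_sum fun i _ => mul_pureUtil_le_util (hu i) hx hvote (hdev i)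

/-- Welfare of the restricted-best-response fixed point: if s is an optimal pure
profile that is a disjoint union of jolly stars, D* its set of self-voters, and
x a mixed profile in which every i ∈ D* self-votes with probability at least ε
and every j ∉ D* plays a best response among unit-sum strategies, then
SW(x) ≥ ε · OPT. -/
theorem stmt8 {n : ℕ} (ε : ℝ) (hε : ε ∈ Set.Icc (0:ℝ) 1)
    (u : Fin n → Fin n → ℝ) (hu : ∀ i j, 0 ≤ u i j ∧ u i j ≤ 1)
    (s : Fin n → Option (Fin n))
    (hsopt : IsGreatest (SWvals u) (∑ i, pureUtil u s i))
    (hstar : ∀ i, s i = some i ∨ ∃ j, j ≠ i ∧ s i = some j ∧ s j = some j ∧ 0 < u i j)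
    (x : Fin n → Fin n → ℝ) (hx : IsMixed x)
    (hx1 : ∀ i, s i = some i → ε ≤ x i i)
    (hx2 : ∀ j, s j ≠ some j →
      ∀ y : Fin n → ℝ, (∀ k, 0 ≤ y k) → (∑ k, y k) = 1 →
        util u x j ≥ util u (Function.update x j y) j) :
    SW u x ≥ ε * (∑ i, pureUtil u s i) := by
  exact stmt8_general (fun i j => (hu i j).1) s hx hx1 fun i hi k =>
    hx2 i hi _ (isStrat_single k).1 (Fintype.sum_pi_single' k 1)
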